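/- arXiv:2104.11310 — 2 statements merged into one kernel-verified Lean document; each statement's English description precedes it below -/
import Mathlib

section
/- Let ε < 0.3 and let F = (X_1, …, X_n) with X_i ∈ ℝ^{d×d_i} and n > d be an ε-nearly equal-norm Parseval matrix frame. Then there exists an equal-norm Parseval matrix frame W = (W_1, …, W_n) with W_i ∈ ℝ^{d×d_i} such that dist²(F, W) ≤ 26·ε·d². -/
open scoped BigOperators
open Matrix

namespace MFrames

/-- The squared Frobenius norm of a real matrix. -/
noncomputable def frobSq {α β : Type*} [Fintype α] [Fintype β] (X : Matrix α β ℝ) : ℝ :=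
  ∑ i, ∑ j, X i j ^ 2

variable {d n : ℕ} {m : Fin n → ℕ}

/-- Squared distance between two tuples of matrices. -/
noncomputable def dist2 (F G : ∀ i : Fin n, Matrix (Fin d) (Fin (m i)) ℝ) : ℝ :=
  ∑ i, frobSq (F i - G i)

/-- The frame operator `∑ Xᵢ Xᵢᵀ`. -/
noncomputable def frameOp (F : ∀ i : Fin n, Matrix (Fin d) (Fin (m i)) ℝ) :
    Matrix (Fin d) (Fin d) ℝ :=
  ∑ i, F i * (F i)ᵀ

/-- `F` is a matrix frame: `∑ Xᵢ Xᵢᵀ` is positive definite. -/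
def IsMatrixFrame (F : ∀ i : Fin n, Matrix (Fin d) (Fin (m i)) ℝ) : Prop :=
  (frameOp F).PosDef

/-- `F` is an ε-nearly equal-norm Parseval matrix frame. -/
def NearlyENParseval (ε : ℝ) (F : ∀ i : Fin n, Matrix (Fin d) (Fin (m i)) ℝ) : Prop :=
  (frameOp F - (1 - ε) • (1 : Matrix (Fin d) (Fin d) ℝ)).PosSemidef ∧
  ((1 + ε) • (1 : Matrix (Fin d) (Fin d) ℝ) - frameOp F).PosSemidef ∧
  ∀ i, (1 - ε) * ((d : ℝ) / n) ≤ frobSq (F i) ∧ frobSq (F i) ≤ (1 + ε) * ((d : ℝ) / n)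

/-- `F` is an equal-norm Parseval matrix frame. -/
def EqualNormParseval (F : ∀ i : Fin n, Matrix (Fin d) (Fin (m i)) ℝ) : Prop :=
  frameOp F = 1 ∧ ∀ i, frobSq (F i) = (d : ℝ) / n

/-- The columns of the concatenated matrix `[X₁ | … | Xₙ]`. -/
def col (F : ∀ i : Fin n, Matrix (Fin d) (Fin (m i)) ℝ) (p : (i : Fin n) × Fin (m i)) :
    Fin d → ℝ :=
  fun r => F p.1 r p.2

/-- `F` is generic: `n > d` and any `d` of the columns of `[X₁ | … | Xₙ]` are linearly
independent (hence a basis of `ℝ^d`). -/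
def Generic (F : ∀ i : Fin n, Matrix (Fin d) (Fin (m i)) ℝ) : Prop :=
  d < n ∧ ∀ S : Finset ((i : Fin n) × Fin (m i)), S.card = d →
    LinearIndependent ℝ (fun p : S => col F (p : (i : Fin n) × Fin (m i)))

/-- Column span of a matrix. -/
def colSpan {k : ℕ} (X : Matrix (Fin d) (Fin k) ℝ) : Submodule ℝ (Fin d → ℝ) :=
  Submodule.span ℝ (Set.range Xᵀ)

/-- The orbit polytope `K_F` of a tuple of matrices. -/
def orbitPolytope (F : ∀ i : Fin n, Matrix (Fin d) (Fin (m i)) ℝ) : Set (Fin n → ℝ) :=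
  {c | (∀ i, 0 ≤ c i) ∧ (∑ i, c i = d) ∧
    ∀ I : Finset (Fin n),
      ∑ i ∈ I, c i ≤ (Module.finrank ℝ ↥(⨆ i ∈ I, colSpan (F i)) : ℝ)}

/-- `Φ_F(t) = log det (∑ e^{tᵢ} Xᵢ Xᵢᵀ)`. -/
noncomputable def Phi (F : ∀ i : Fin n, Matrix (Fin d) (Fin (m i)) ℝ) (t : Fin n → ℝ) : ℝ :=
  Real.log (∑ i, Real.exp (t i) • (F i * (F i)ᵀ)).det

/-- The objective function `Φ_F(t) - ⟨t, c⟩` whose infimum over `t` is `f_F(c)`. -/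
noncomputable def obj (F : ∀ i : Fin n, Matrix (Fin d) (Fin (m i)) ℝ)
    (c : Fin n → ℝ) (t : Fin n → ℝ) : ℝ :=
  Phi F t - ∑ i, t i * c i

/-- `Δ_S` for `S ∈ 𝒜`, where `S` is encoded as a function `σ` assigning to each `i` a subset
`σ i ⊆ {1,…,dᵢ}` of the columns of `Xᵢ` (with `i ∈ S` iff `σ i ≠ ∅`). -/
noncomputable def Delta (F : ∀ i : Fin n, Matrix (Fin d) (Fin (m i)) ℝ)
    (σ : ∀ i : Fin n, Finset (Fin (m i))) : ℝ :=
  (∑ i, ∑ k ∈ σ i, Matrix.of (fun r s : Fin d => F i r k * F i s k)).det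

/-- The index set `𝒜`: collections of subsets of columns with `d` columns in total. -/
def indexA (d : ℕ) (m : Fin n → ℕ) : Finset (∀ i : Fin n, Finset (Fin (m i))) :=
  Finset.univ.filter fun σ => (∑ i, (σ i).card) = d

/-- Membership in the semialgebraic set `𝕍(F, c)`.  (Summing `(σ i).card • ⋯` over all of
`𝒜` is the same as summing `|Sᵢ| • ⋯` over those `S ∈ 𝒜` with `i ∈ S`.) -/
noncomputable def inVariety (F : ∀ i : Fin n, Matrix (Fin d) (Fin (m i)) ℝ)
    (c ξ : Fin n → ℝ) : Prop :=
  (∀ i, 0 < ξ i) ∧ ∀ i,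
    (∑ σ ∈ indexA d m, ((σ i).card : ℝ) * (∏ l, ξ l ^ (σ l).card) * Delta F σ)
      = c i * ∑ σ ∈ indexA d m, (∏ l, ξ l ^ (σ l).card) * Delta F σ

/-- `A` transforms `(F, c)` into a radial isotropic frame. -/
noncomputable def TransformsToRIF (F : ∀ i : Fin n, Matrix (Fin d) (Fin (m i)) ℝ)
    (c : Fin n → ℝ) (A : Matrix (Fin d) (Fin d) ℝ) : Prop :=
  ∑ i, (c i / frobSq (A * F i)) • ((A * F i) * (A * F i)ᵀ) = 1

/-- Columns of `X` all orthogonal to the subspace `T`, i.e. `Col(X) ⊆ T^⊥`. -/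
def colsPerp {k : ℕ} (X : Matrix (Fin d) (Fin k) ℝ) (T : Submodule ℝ (Fin d → ℝ)) : Prop :=
  ∀ x ∈ T, Xᵀ.mulVec x = 0

end MFrames

/-!
Assume first that choosing one column from each `X i` gives vectors in general position. Then the
product of the squared norms `∏ ‖M X_i‖²` is coercive on the matrices of determinant one, hence has
a minimiser `M`, and stationarity says that suitable rescalings `t_i M X_i` form an equal-norm
Parseval frame. This property only depends on `Mᵀ M`, so `M` may be taken positive semidefinite.

In an eigenbasis of `M` each `X_i` is then scaled by a nonnegative function which is monotone in the
eigenvalue, so the changes of its squared row norms have a single sign change. The squared distance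
is at most the sum of the absolute values of these changes. A single sign change bounds that sum by
partial sums over the rows; summed over `i`, these are controlled by the upper frame bound.

The general position assumption is removed by density, since the set of equal-norm Parseval frames
is compact.
-/

namespace MFrames

section Frobenius

variable {α β γ δ : Type*} [Fintype α] [Fintype β] [Fintype γ] [Fintype δ]

open scoped Matrix.Norms.Frobenius in
lemma frobSq_eq_norm_sq (X : Matrix α β ℝ) : frobSq X = ‖X‖ ^ 2 := by
  rw [Matrix.frobenius_norm_def, ← Real.sqrt_eq_rpow, Real.sq_sqrt (by positivity)]
  simp [frobSq]

lemma frobSq_nonneg (X : Matrix α β ℝ) : 0 ≤ frobSq X := by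
  rw [frobSq_eq_norm_sq]; positivity

lemma frobSq_smul (c : ℝ) (X : Matrix α β ℝ) : frobSq (c • X) = c ^ 2 * frobSq X := by
  simp [frobSq, mul_pow, Finset.mul_sum]

open scoped Matrix.Norms.Frobenius in
lemma frobSq_mul_le (A : Matrix α β ℝ) (B : Matrix β γ ℝ) :
    frobSq (A * B) ≤ frobSq A * frobSq B := by
  simp only [frobSq_eq_norm_sq, ← mul_pow]
  exact pow_le_pow_left₀ (norm_nonneg _) (Matrix.frobenius_norm_mul A B) 2

lemma frobSq_transpose (X : Matrix α β ℝ) : frobSq Xᵀ = frobSq X := Finset.sum_comm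

lemma sum_sq_col_le_frobSq (X : Matrix α β ℝ) (j : β) : ∑ r, X r j ^ 2 ≤ frobSq X := by
  rw [← frobSq_transpose]
  exact Finset.single_le_sum (f := fun j => ∑ r, X r j ^ 2)
    (fun _ _ => Finset.sum_nonneg fun _ _ => sq_nonneg _) (Finset.mem_univ j)

lemma sum_sq_mulVec_col_le_frobSq (M : Matrix α β ℝ) (X : Matrix β γ ℝ) (l : γ) :
    ∑ r, (M *ᵥ X.col l) r ^ 2 ≤ frobSq (M * X) :=
  sum_sq_col_le_frobSq (M * X) l

lemma continuous_frobSq : Continuous (frobSq : Matrix α β ℝ → ℝ) := by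
  unfold frobSq; fun_prop

lemma isCompact_frobSq_le (R : ℝ) : IsCompact {X : Matrix α β ℝ | frobSq X ≤ R} := by
  open scoped Matrix.Norms.Frobenius in
  refine (isCompact_closedBall (0 : Matrix α β ℝ) √R).of_isClosed_subset
    (isClosed_le continuous_frobSq continuous_const) fun X hX => ?_
  rw [mem_closedBall_zero_iff]
  exact Real.le_sqrt_of_sq_le (frobSq_eq_norm_sq X ▸ hX)

lemma frobSq_eq_trace_mul_transpose (X : Matrix α β ℝ) : frobSq X = (X * Xᵀ).trace := by
  simp [frobSq, Matrix.trace, Matrix.mul_apply, sq]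

lemma frobSq_mul_eq_trace (A : Matrix α β ℝ) (X : Matrix β γ ℝ) :
    frobSq (A * X) = (A * (X * Xᵀ) * Aᵀ).trace := by
  rw [frobSq_eq_trace_mul_transpose, Matrix.transpose_mul]
  simp only [Matrix.mul_assoc]

lemma frobSq_mul_eq_of_gram_eq {A : Matrix α γ ℝ} {B : Matrix β γ ℝ} (h : Aᵀ * A = Bᵀ * B)
    (X : Matrix γ δ ℝ) : frobSq (A * X) = frobSq (B * X) := by
  rw [frobSq_mul_eq_trace, frobSq_mul_eq_trace, Matrix.trace_mul_cycle A,
    Matrix.trace_mul_cycle B, h]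

lemma frobSq_orthogonal_mul [DecidableEq γ] {U : Matrix α γ ℝ} (hU : Uᵀ * U = 1)
    (X : Matrix γ δ ℝ) : frobSq (U * X) = frobSq X := by
  simpa using frobSq_mul_eq_of_gram_eq (B := (1 : Matrix γ γ ℝ)) (by simpa using hU) X

lemma nonempty_of_frobSq_pos {X : Matrix α β ℝ} (h : 0 < frobSq X) : Nonempty β := by
  by_contra hβ
  rw [not_nonempty_iff] at hβ
  simp [frobSq] at h

end Frobenius

/-- Along increasing values of `ν`, the family `u` changes sign at most once, from nonnegative to
nonpositive; entries with equal `ν` may not have opposite signs. For such families `∑ |u j|` is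
controlled by the sums over sublevel sets of `ν`. -/
def SingleCrossing {α : Type*} (ν u : α → ℝ) : Prop :=
  ∀ ⦃j l⦄, ν j ≤ ν l → 0 < u l → 0 ≤ u j

namespace SingleCrossing

variable {α ι : Type*} [Fintype α] [Fintype ι]

lemma neg_abs_sum_le_sum_filter {ν u : α → ℝ} (h : SingleCrossing ν u) (t : ℝ) :
    -|∑ j, u j| ≤ ∑ j with ν j ≤ t, u j := by
  by_cases hpos : ∃ l, t < ν l ∧ 0 < u l
  · obtain ⟨l, hl, hul⟩ := hpos
    have hnonneg : 0 ≤ ∑ j with ν j ≤ t, u j := Finset.sum_nonneg fun j hj =>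
      h ((Finset.mem_filter.1 hj).2.trans hl.le) hul
    linarith [abs_nonneg (∑ j, u j)]
  · push Not at hpos
    have hrest : ∑ j with ¬ν j ≤ t, u j ≤ 0 := Finset.sum_nonpos fun j hj =>
      hpos j (not_le.1 (Finset.mem_filter.1 hj).2)
    linarith [Finset.sum_filter_add_sum_filter_not Finset.univ (fun j => ν j ≤ t) u,
      neg_abs_le (∑ j, u j)]

lemma sum_posPart_le {ν u : α → ℝ} (h : SingleCrossing ν u) :
    ∑ j, (u j)⁺ ≤ ∑ l, ((∑ j with ν j ≤ ν l, u j) + |∑ j, u j|) := by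
  have hterm : ∀ l, 0 ≤ (∑ j with ν j ≤ ν l, u j) + |∑ j, u j| := fun l => by
    linarith [h.neg_abs_sum_le_sum_filter (ν l)]
  rcases (Finset.univ.filter fun j => 0 < u j).eq_empty_or_nonempty with hempty | hne
  · have hzero : ∀ j, (u j)⁺ = 0 := fun j =>
      posPart_eq_zero.2 (not_lt.1 (Finset.filter_eq_empty_iff.1 hempty (Finset.mem_univ j)))
    simpa [hzero] using Finset.sum_nonneg fun l (_ : l ∈ Finset.univ) => hterm l
  obtain ⟨l, hl, hmax⟩ := Finset.exists_max_image _ ν hne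
  have hbelow : ∑ j, (u j)⁺ = ∑ j with ν j ≤ ν l, u j := by
    rw [Finset.sum_filter]
    refine Finset.sum_congr rfl fun j _ => ?_
    split_ifs with hj
    · exact posPart_of_nonneg (h hj (Finset.mem_filter.1 hl).2)
    · exact posPart_eq_zero.2 (not_lt.1 fun hpos => hj (hmax j (by simpa using hpos)))
  calc ∑ j, (u j)⁺ ≤ (∑ j with ν j ≤ ν l, u j) + |∑ j, u j| := by
        linarith [abs_nonneg (∑ j, u j)]
    _ ≤ _ := Finset.single_le_sum (fun l _ => hterm l) (Finset.mem_univ l)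

lemma sum_abs_le {ν u : α → ℝ} (h : SingleCrossing ν u) :
    ∑ j, |u j| ≤
      2 * ∑ l, ∑ j with ν j ≤ ν l, u j + (2 * Fintype.card α + 1) * |∑ j, u j| := by
  have habs : ∑ j, |u j| = 2 * ∑ j, (u j)⁺ - ∑ j, u j := by
    rw [Finset.mul_sum, ← Finset.sum_sub_distrib]
    refine Finset.sum_congr rfl fun j _ => ?_
    linarith [posPart_add_negPart (u j), posPart_sub_negPart (u j)]
  have hpos := h.sum_posPart_le
  simp only [Finset.sum_add_distrib, Finset.sum_const, Finset.card_univ, nsmul_eq_mul] at hpos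
  linarith [neg_abs_le (∑ j, u j)]

lemma sum_sum_abs_le {ν : α → ℝ} {u : ι → α → ℝ} (h : ∀ i, SingleCrossing ν (u i)) {η : ℝ}
    (hη : 0 ≤ η) (hcol : ∀ j, ∑ i, u i j ≤ η) :
    ∑ i, ∑ j, |u i j| ≤
      2 * η * (Fintype.card α : ℝ) ^ 2 + (2 * Fintype.card α + 1) * ∑ i, |∑ j, u i j| := by
  have hlevel : ∀ l, ∑ j with ν j ≤ ν l, ∑ i, u i j ≤ Fintype.card α * η := fun l =>
    calc ∑ j with ν j ≤ ν l, ∑ i, u i j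
      _ ≤ ∑ j with ν j ≤ ν l, η := Finset.sum_le_sum fun j _ => hcol j
      _ ≤ ∑ _j : α, η := Finset.sum_le_sum_of_subset_of_nonneg (Finset.filter_subset _ _)
          fun _ _ _ => hη
      _ = Fintype.card α * η := by simp
  have hlevels : ∑ i, ∑ l, ∑ j with ν j ≤ ν l, u i j ≤ Fintype.card α * (Fintype.card α * η) :=
    calc ∑ i, ∑ l, ∑ j with ν j ≤ ν l, u i j
      _ = ∑ l, ∑ j with ν j ≤ ν l, ∑ i, u i j := by
          rw [Finset.sum_comm]
          exact Finset.sum_congr rfl fun l _ => Finset.sum_comm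
      _ ≤ ∑ _l : α, Fintype.card α * η := Finset.sum_le_sum fun l _ => hlevel l
      _ = Fintype.card α * (Fintype.card α * η) := by simp
  calc ∑ i, ∑ j, |u i j|
    _ ≤ ∑ i, (2 * ∑ l, ∑ j with ν j ≤ ν l, u i j
          + (2 * Fintype.card α + 1) * |∑ j, u i j|) :=
        Finset.sum_le_sum fun i _ => (h i).sum_abs_le
    _ = 2 * ∑ i, ∑ l, ∑ j with ν j ≤ ν l, u i j
          + (2 * Fintype.card α + 1) * ∑ i, |∑ j, u i j| := by
        rw [Finset.sum_add_distrib, ← Finset.mul_sum, ← Finset.mul_sum]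
    _ ≤ _ := by linarith

end SingleCrossing

section MonotoneScaling

variable {α ι : Type*} [Fintype α] [DecidableEq α] [Fintype ι]
  {κ : ι → Type*} [∀ i, Fintype (κ i)]

lemma one_sub_sq_le_abs_one_sub_sq {q : ℝ} (hq : 0 ≤ q) : (1 - q) ^ 2 ≤ |1 - q ^ 2| :=
  calc (1 - q) ^ 2 = |1 - q| * |1 - q| := by rw [abs_mul_abs_self, sq]
    _ ≤ |1 - q| * |1 + q| := mul_le_mul_of_nonneg_left
        ((abs_le.2 ⟨by linarith, by linarith⟩).trans (le_abs_self _)) (abs_nonneg _)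
    _ = |1 - q ^ 2| := by rw [← abs_mul]; ring_nf

lemma sum_sq_diagonal_mul_row {β : Type*} [Fintype β] (q : α → ℝ) (Z : Matrix α β ℝ) (j : α) :
    ∑ l, (diagonal q * Z) j l ^ 2 = q j ^ 2 * ∑ l, Z j l ^ 2 := by
  simp [Matrix.diagonal_mul, mul_pow, Finset.mul_sum]

lemma frobSq_sub_diagonal_mul_le {β : Type*} [Fintype β] {q : α → ℝ} (hq : ∀ j, 0 ≤ q j)
    (Z : Matrix α β ℝ) :
    frobSq (Z - diagonal q * Z) ≤
      ∑ j, |∑ l, Z j l ^ 2 - ∑ l, (diagonal q * Z) j l ^ 2| := by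
  refine Finset.sum_le_sum fun j _ => ?_
  rw [sum_sq_diagonal_mul_row, ← one_sub_mul, abs_mul,
    abs_of_nonneg (Finset.sum_nonneg fun l _ => sq_nonneg (Z j l)), Finset.mul_sum]
  refine Finset.sum_le_sum fun l _ => ?_
  calc (Z - diagonal q * Z) j l ^ 2 = (1 - q j) ^ 2 * Z j l ^ 2 := by
        rw [Matrix.sub_apply, Matrix.diagonal_mul]; ring
    _ ≤ |1 - q j ^ 2| * Z j l ^ 2 := by
        gcongr
        exact one_sub_sq_le_abs_one_sub_sq (hq j)

lemma singleCrossing_row_sub_diagonal_mul {β : Type*} [Fintype β] {ν q : α → ℝ}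
    (hq : ∀ j, 0 ≤ q j) (hmono : ∀ j l, ν j ≤ ν l → q j ≤ q l) (Z : Matrix α β ℝ) :
    SingleCrossing ν fun j => ∑ l, Z j l ^ 2 - ∑ l, (diagonal q * Z) j l ^ 2 := by
  intro j l hjl hl
  simp only [sum_sq_diagonal_mul_row, ← one_sub_mul] at hl ⊢
  have hql : q l ^ 2 < 1 :=
    sub_pos.1 (pos_of_mul_pos_left hl (Finset.sum_nonneg fun k _ => sq_nonneg (Z l k)))
  have hqj : q j ^ 2 ≤ q l ^ 2 := pow_le_pow_left₀ (hq j) (hmono j l hjl) 2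
  exact mul_nonneg (by linarith) (Finset.sum_nonneg fun k _ => sq_nonneg (Z j k))

lemma sum_frobSq_sub_diagonal_mul_le {ν : α → ℝ} {q : ι → α → ℝ} (hq : ∀ i j, 0 ≤ q i j)
    (hmono : ∀ i j l, ν j ≤ ν l → q i j ≤ q i l) (Z : ∀ i, Matrix α (κ i) ℝ) {η : ℝ} (hη : 0 ≤ η)
    (hdiag : ∀ j, (∑ i, Z i * (Z i)ᵀ) j j ≤
      (∑ i, (diagonal (q i) * Z i) * (diagonal (q i) * Z i)ᵀ) j j + η) :
    ∑ i, frobSq (Z i - diagonal (q i) * Z i) ≤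
      2 * η * (Fintype.card α : ℝ) ^ 2 +
        (2 * Fintype.card α + 1) * ∑ i, |frobSq (Z i) - frobSq (diagonal (q i) * Z i)| := by
  have hcol : ∀ j, ∑ i, (∑ l, Z i j l ^ 2 - ∑ l, (diagonal (q i) * Z i) j l ^ 2) ≤ η := by
    intro j
    have h := hdiag j
    simp only [Matrix.sum_apply, Matrix.mul_apply (N := (_)ᵀ), Matrix.transpose_apply,
      ← sq] at h
    rw [Finset.sum_sub_distrib]
    linarith
  calc ∑ i, frobSq (Z i - diagonal (q i) * Z i)
    _ ≤ ∑ i, ∑ j, |∑ l, Z i j l ^ 2 - ∑ l, (diagonal (q i) * Z i) j l ^ 2| :=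
        Finset.sum_le_sum fun i _ => frobSq_sub_diagonal_mul_le (hq i) (Z i)
    _ ≤ _ := SingleCrossing.sum_sum_abs_le
        (fun i => singleCrossing_row_sub_diagonal_mul (hq i) (hmono i) (Z i)) hη hcol
    _ = _ := by simp only [Finset.sum_sub_distrib, frobSq]

lemma exists_orthogonal_conj_eq_diagonal {P : Matrix α α ℝ} (hP : P.PosSemidef) :
    ∃ (U : Matrix α α ℝ) (μ : α → ℝ),
      U * Uᵀ = 1 ∧ (∀ j, 0 ≤ μ j) ∧ Uᵀ * P * U = diagonal μ := by
  refine ⟨hP.1.eigenvectorUnitary, hP.1.eigenvalues,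
    Unitary.mul_star_self_of_mem hP.1.eigenvectorUnitary.2, hP.eigenvalues_nonneg, ?_⟩
  have hspec := hP.1.conjStarAlgAut_star_eigenvectorUnitary
  rwa [Unitary.conjStarAlgAut_apply] at hspec

lemma sum_frobSq_sub_smul_mul_le {P : Matrix α α ℝ} (hP : P.PosSemidef) {t : ι → ℝ}
    (ht : ∀ i, 0 ≤ t i) (X : ∀ i, Matrix α (κ i) ℝ) {η : ℝ} (hη : 0 ≤ η)
    (hX : ((∑ i, (t i • (P * X i)) * (t i • (P * X i))ᵀ) + η • 1 - ∑ i, X i * (X i)ᵀ).PosSemidef) :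
    ∑ i, frobSq (X i - t i • (P * X i)) ≤
      2 * η * (Fintype.card α : ℝ) ^ 2 +
        (2 * Fintype.card α + 1) * ∑ i, |frobSq (X i) - frobSq (t i • (P * X i))| := by
  obtain ⟨U, μ, hU, hμ, hdiagonal⟩ := exists_orthogonal_conj_eq_diagonal hP
  have hPU : Uᵀ * P = diagonal μ * Uᵀ := by
    rw [← hdiagonal, Matrix.mul_assoc, hU, Matrix.mul_one]
  have hscale : ∀ i, diagonal (t i • μ) * (Uᵀ * X i) = Uᵀ * (t i • (P * X i)) := fun i => by
    rw [Matrix.diagonal_smul, Matrix.smul_mul, Matrix.mul_smul, ← Matrix.mul_assoc, ← hPU,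
      Matrix.mul_assoc]
  have hrotate : ∀ i (A : Matrix α (κ i) ℝ), frobSq (Uᵀ * A) = frobSq A :=
    fun _ A => frobSq_orthogonal_mul (by simpa using hU) A
  have hconj : ∀ Y : ∀ i, Matrix α (κ i) ℝ,
      ∑ i, (Uᵀ * Y i) * (Uᵀ * Y i)ᵀ = Uᵀ * (∑ i, Y i * (Y i)ᵀ) * U := fun Y => by
    simp only [Matrix.mul_sum, Matrix.sum_mul, Matrix.transpose_mul, Matrix.transpose_transpose,
      Matrix.mul_assoc]
  have hdiag : ∀ j, (∑ i, (Uᵀ * X i) * (Uᵀ * X i)ᵀ) j j ≤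
      (∑ i, (diagonal (t i • μ) * (Uᵀ * X i)) * (diagonal (t i • μ) * (Uᵀ * X i))ᵀ) j j + η := by
    intro j
    have h := (hX.conjTranspose_mul_mul_same U).diag_nonneg (i := j)
    simp only [hscale, hconj]
    rw [Matrix.conjTranspose_eq_transpose_of_trivial, Matrix.mul_sub, Matrix.mul_add,
      Matrix.sub_mul, Matrix.add_mul, Matrix.mul_smul, Matrix.mul_one, Matrix.smul_mul,
      mul_eq_one_comm.1 hU] at h
    simp only [Matrix.sub_apply, Matrix.add_apply, Matrix.smul_apply, Matrix.one_apply_eq,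
      smul_eq_mul, mul_one] at h
    linarith
  have h := sum_frobSq_sub_diagonal_mul_le (ν := μ) (q := fun i => t i • μ)
    (fun i j => mul_nonneg (ht i) (hμ j))
    (fun i j l hjl => mul_le_mul_of_nonneg_left hjl (ht i)) (fun i => Uᵀ * X i) hη hdiag
  simpa only [hscale, ← Matrix.mul_sub, hrotate] using h

end MonotoneScaling

section GeneralPosition

lemma finite_det_add_smul_eq_zero {α K : Type*} [Fintype α] [DecidableEq α] [Field K]
    (A : Matrix α α K) {V : Matrix α α K} (hV : V.det ≠ 0) :
    {s : K | (A + s • V).det = 0}.Finite := by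
  set p := ((Polynomial.X : Polynomial K) • V.map Polynomial.C + A.map Polynomial.C).det with hp
  have hp0 : p ≠ 0 := fun h => hV (by
    rw [← Polynomial.coeff_det_X_add_C_card V A, ← hp, h, Polynomial.coeff_zero])
  refine (Polynomial.finite_setOfPred_isRoot hp0).subset fun s hs => ?_
  rw [Set.mem_ofPred_eq] at hs ⊢
  rw [Polynomial.IsRoot.def, hp, ← Polynomial.coe_evalRingHom, RingHom.map_det, ← hs]
  congr 1
  ext a b
  simp [add_comm (A a b), mul_comm s]

variable {α ι : Type*} [Fintype α] [DecidableEq α]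

/-- Any `card α` of the vectors `x i` with distinct indices form a basis of `ℝ^α`, expressed
through the nonvanishing of their determinant. This is what makes the product of squared norms
coercive on the matrices of determinant one. -/
def InGeneralPosition (x : ι → α → ℝ) : Prop :=
  ∀ f : α ↪ ι, (Matrix.of fun j => x (f j)).det ≠ 0

/-- The points are taken on the moment curve. -/
lemma exists_inGeneralPosition (α ι : Type*) [Fintype α] [DecidableEq α] [Finite ι] :
    ∃ x : ι → α → ℝ, InGeneralPosition x := by
  let e := Fintype.equivFin α
  let node : ι → ℝ := fun i => (Finite.equivFin ι i : ℕ)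
  have hnode : Function.Injective node := fun i j hij =>
    (Finite.equivFin ι).injective (Fin.ext (Nat.cast_injective hij))
  refine ⟨fun i r => node i ^ (e r : ℕ), fun f => ?_⟩
  have hvandermonde : (Matrix.of fun j r => node (f j) ^ (e r : ℕ)) =
      (Matrix.vandermonde fun k => node (f (e.symm k))).submatrix e e := by
    ext; simp [Matrix.vandermonde_apply]
  rw [hvandermonde, Matrix.det_submatrix_equiv_self, Matrix.det_vandermonde_ne_zero_iff]
  exact hnode.comp (f.injective.comp e.symm.injective)

open Filter Topology in
lemma InGeneralPosition.eventually_add_smul [Finite ι] {v : ι → α → ℝ} (hv : InGeneralPosition v)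
    (x : ι → α → ℝ) : ∀ᶠ s : ℝ in 𝓝[≠] 0, InGeneralPosition (x + s • v) := by
  refine eventually_all.2 fun f => ?_
  exact nhdsNE_le_cofinite 0 (finite_det_add_smul_eq_zero (Matrix.of fun j => x (f j))
    (hv f)).eventually_cofinite_notMem

open Filter Topology in
lemma mem_closure_inGeneralPosition [Finite ι] {κ : ι → Type*}
    (k : ∀ i, κ i) (F : ∀ i, Matrix α (κ i) ℝ) :
    F ∈ closure {G : ∀ i, Matrix α (κ i) ℝ | InGeneralPosition fun i => (G i).col (k i)} := by
  obtain ⟨v, hv⟩ := exists_inGeneralPosition α ι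
  let V : ∀ i, Matrix α (κ i) ℝ := fun i => Matrix.of fun r _ => v i r
  have htendsto : Tendsto (fun s : ℝ => F + s • V) (𝓝[≠] 0) (𝓝 F) := by
    have hcont : Continuous fun s : ℝ => F + s • V := by fun_prop
    simpa using (hcont.tendsto 0).mono_left nhdsWithin_le_nhds
  exact mem_closure_of_tendsto htendsto (hv.eventually_add_smul fun i => (F i).col (k i))

end GeneralPosition

section Minimizer

lemma pow_le_prod_of_forall_le_prod {ι : Type*} {p : ι → ℝ} {δ : ℝ} {d : ℕ}
    (hp : ∀ i, 0 ≤ p i) (hδ : 0 ≤ δ) (hδ1 : δ ≤ 1) (hd : d ≠ 0)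
    (h : ∀ S : Finset ι, S.card = d → δ ≤ ∏ i ∈ S, p i) (A : Finset ι) (hA : d ≤ A.card) :
    δ ^ (A.card - d + 1) ≤ ∏ i ∈ A, p i := by
  classical
  obtain ⟨k, hk⟩ := Nat.exists_eq_add_of_le hA
  induction k generalizing A with
  | zero => simpa [hk] using h A hk
  | succ k ih =>
    obtain ⟨i, hiA, hi⟩ : ∃ i ∈ A, δ ≤ p i := by
      by_contra! hlt
      obtain ⟨S, hSA, hS⟩ := Finset.exists_subset_card_eq hA
      obtain ⟨i, hiS⟩ := Finset.card_ne_zero.1 (hS.trans_ne hd)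
      have hrest : ∏ j ∈ S.erase i, p j ≤ 1 := Finset.prod_le_one (fun j _ => hp j)
        fun j hj => (hlt j (hSA (Finset.mem_of_mem_erase hj))).le.trans hδ1
      have hprod : δ ≤ p i * ∏ j ∈ S.erase i, p j := Finset.mul_prod_erase S p hiS ▸ h S hS
      linarith [mul_le_of_le_one_right (hp i) hrest, hlt i (hSA hiS)]
    have hcard : (A.erase i).card = d + k := by
      rw [Finset.card_erase_of_mem hiA]; lia
    calc δ ^ (A.card - d + 1) = δ * δ ^ ((A.erase i).card - d + 1) := by
          rw [← pow_succ']; congr 1; lia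
      _ ≤ p i * ∏ j ∈ A.erase i, p j :=
          mul_le_mul hi (ih _ (by lia) hcard) (by positivity) (hp i)
      _ = ∏ j ∈ A, p j := Finset.mul_prod_erase A p hiA

lemma norm_sq_le_sum_sq {α : Type*} [Fintype α] (x : α → ℝ) : ‖x‖ ^ 2 ≤ ∑ r, x r ^ 2 := by
  refine (Real.le_sqrt (norm_nonneg x) (by positivity)).1
    ((pi_norm_le_iff_of_nonneg (Real.sqrt_nonneg _)).2 fun r => Real.le_sqrt_of_sq_le ?_)
  rw [Real.norm_eq_abs, sq_abs]
  exact Finset.single_le_sum (f := fun r => x r ^ 2) (fun _ _ => sq_nonneg _) (Finset.mem_univ r)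

lemma exists_det_sq_le (α : Type*) [Fintype α] [DecidableEq α] :
    ∃ C : ℝ, 0 < C ∧ ∀ A : Matrix α α ℝ, A.det ^ 2 ≤ C * ∏ j, ∑ r, A j r ^ 2 := by
  obtain ⟨C, hC, hbound⟩ := MultilinearMap.exists_bound_of_continuous
    (Matrix.detRowAlternating (n := α) (R := ℝ)).toMultilinearMap
    (continuous_id.matrix_det)
  refine ⟨C ^ 2, by positivity, fun A => ?_⟩
  calc A.det ^ 2 = ‖A.det‖ ^ 2 := by rw [Real.norm_eq_abs, sq_abs]
    _ ≤ (C * ∏ j, ‖A j‖) ^ 2 := pow_le_pow_left₀ (norm_nonneg _) (hbound A) 2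
    _ = C ^ 2 * ∏ j, ‖A j‖ ^ 2 := by rw [mul_pow, Finset.prod_pow]
    _ ≤ C ^ 2 * ∏ j, ∑ r, A j r ^ 2 := by
        gcongr with j
        exact norm_sq_le_sum_sq (A j)

variable {α ι : Type*} [Fintype α] [DecidableEq α] {κ : ι → Type*} [∀ i, Fintype (κ i)]
  {X : ∀ i, Matrix α (κ i) ℝ} {k : ∀ i, κ i}

namespace InGeneralPosition

lemma exists_le_prod_frobSq [Finite ι] (hX : InGeneralPosition fun i => (X i).col (k i)) :
    ∃ δ : ℝ, 0 < δ ∧ δ ≤ 1 ∧ ∀ M : Matrix α α ℝ, M.det = 1 →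
      ∀ S : Finset ι, S.card = Fintype.card α → δ ≤ ∏ i ∈ S, frobSq (M * X i) := by
  obtain ⟨C, hC, hdet⟩ := exists_det_sq_le α
  obtain ⟨δ, hδ, hδle⟩ : ∃ δ : ℝ, 0 < δ ∧
      ∀ f : α ↪ ι, δ ≤ (Matrix.of fun j => (X (f j)).col (k (f j))).det ^ 2 / C := by
    rcases isEmpty_or_nonempty (α ↪ ι) with h | h
    · exact ⟨1, one_pos, fun f => h.elim f⟩
    · obtain ⟨f, hf⟩ := Finite.exists_min fun f : α ↪ ι =>
        (Matrix.of fun j => (X (f j)).col (k (f j))).det ^ 2 / C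
      exact ⟨_, div_pos (sq_pos_of_ne_zero (hX f)) hC, hf⟩
  refine ⟨min δ 1, lt_min hδ one_pos, min_le_right _ _, fun M hM S hS => ?_⟩
  let e : α ≃ S := Fintype.equivOfCardEq (by simpa using hS.symm)
  let f : α ↪ ι := e.toEmbedding.trans (Function.Embedding.subtype _)
  have hmul : (Matrix.of fun j => M *ᵥ (X (f j)).col (k (f j))).det =
      (Matrix.of fun j => (X (f j)).col (k (f j))).det := by
    have : (Matrix.of fun j => M *ᵥ (X (f j)).col (k (f j))) =
        (Matrix.of fun j => (X (f j)).col (k (f j))) * Mᵀ := by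
      ext j r
      simp [Matrix.mulVec, dotProduct, Matrix.mul_apply, mul_comm]
    rw [this, Matrix.det_mul, Matrix.det_transpose, hM, mul_one]
  calc min δ 1 ≤ δ := min_le_left _ _
    _ ≤ (Matrix.of fun j => (X (f j)).col (k (f j))).det ^ 2 / C := hδle f
    _ ≤ ∏ j, ∑ r, (M *ᵥ (X (f j)).col (k (f j))) r ^ 2 := by
        rw [div_le_iff₀' hC, ← hmul]
        exact hdet _
    _ ≤ ∏ j, frobSq (M * X (f j)) := Finset.prod_le_prod
        (fun j _ => by positivity) fun j _ => sum_sq_mulVec_col_le_frobSq M (X (f j)) _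
    _ = ∏ i ∈ S, frobSq (M * X i) := by
        rw [← Finset.prod_coe_sort S]
        exact e.prod_comp fun i : S => frobSq (M * X i)

lemma exists_frobSq_le [Fintype ι] (hX : InGeneralPosition fun i => (X i).col (k i))
    (hcard : Fintype.card α ≤ Fintype.card ι) :
    ∃ R : ℝ, ∀ (M : Matrix α α ℝ) (K : ℝ), (∀ i, frobSq (M * X i) ≤ K) → frobSq M ≤ R * K := by
  obtain ⟨f⟩ := Function.Embedding.nonempty_of_card_le hcard
  let B : Matrix α α ℝ := (Matrix.of fun j => (X (f j)).col (k (f j)))ᵀ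
  have hB : IsUnit B.det := by simpa [B] using hX f
  refine ⟨frobSq B⁻¹ * Fintype.card α, fun M K hK => ?_⟩
  have hMB : frobSq (M * B) ≤ Fintype.card α * K :=
    calc frobSq (M * B) = ∑ j, ∑ r, (M *ᵥ (X (f j)).col (k (f j))) r ^ 2 := Finset.sum_comm
      _ ≤ ∑ _j : α, K := Finset.sum_le_sum fun j _ =>
          (sum_sq_mulVec_col_le_frobSq M (X (f j)) _).trans (hK (f j))
      _ = Fintype.card α * K := by simp
  calc frobSq M = frobSq (M * B * B⁻¹) := by rw [Matrix.mul_nonsing_inv_cancel_right _ _ hB]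
    _ ≤ frobSq (M * B) * frobSq B⁻¹ := frobSq_mul_le _ _
    _ ≤ Fintype.card α * K * frobSq B⁻¹ := mul_le_mul_of_nonneg_right hMB (frobSq_nonneg _)
    _ = frobSq B⁻¹ * Fintype.card α * K := by ring

variable [Fintype ι] [Nonempty α]

lemma prod_frobSq_mul_pos (hX : InGeneralPosition fun i => (X i).col (k i))
    (hcard : Fintype.card α ≤ Fintype.card ι) {M : Matrix α α ℝ} (hM : M.det = 1) :
    0 < ∏ i, frobSq (M * X i) := by
  obtain ⟨δ, hδ, hδ1, hle⟩ := hX.exists_le_prod_frobSq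
  exact (pow_pos hδ _).trans_le (pow_le_prod_of_forall_le_prod (fun i => frobSq_nonneg _) hδ.le hδ1
    Fintype.card_ne_zero (hle M hM) Finset.univ hcard)

open Filter in
lemma exists_isMinOn_prod_frobSq (hX : InGeneralPosition fun i => (X i).col (k i))
    (hcard : Fintype.card α < Fintype.card ι) :
    ∃ M ∈ {M : Matrix α α ℝ | M.det = 1},
      IsMinOn (fun M => ∏ i, frobSq (M * X i)) {M : Matrix α α ℝ | M.det = 1} M := by
  classical
  obtain ⟨δ, hδ, hδ1, hle⟩ := hX.exists_le_prod_frobSq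
  obtain ⟨R, hR⟩ := hX.exists_frobSq_le hcard.le
  set q := δ ^ (Fintype.card ι - 1 - Fintype.card α + 1)
  have hcoercive : ∀ M : Matrix α α ℝ, M.det = 1 →
      ∏ i, frobSq (M * X i) ≤ ∏ i, frobSq ((1 : Matrix α α ℝ) * X i) →
      frobSq M ≤ R * ((∏ i, frobSq ((1 : Matrix α α ℝ) * X i)) / q) := by
    intro M hM hsub
    refine hR M _ fun i => ?_
    rw [le_div_iff₀ (by positivity)]
    have hrest : q ≤ ∏ l ∈ Finset.univ.erase i, frobSq (M * X l) := by
      have hi : (Finset.univ.erase i).card = Fintype.card ι - 1 := by simp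
      simpa only [hi] using pow_le_prod_of_forall_le_prod (fun i => frobSq_nonneg _) hδ.le hδ1
        Fintype.card_ne_zero (hle M hM) (Finset.univ.erase i) (by lia)
    calc frobSq (M * X i) * q
      _ ≤ frobSq (M * X i) * ∏ l ∈ Finset.univ.erase i, frobSq (M * X l) :=
          mul_le_mul_of_nonneg_left hrest (frobSq_nonneg _)
      _ = ∏ l, frobSq (M * X l) :=
          Finset.mul_prod_erase _ (fun l => frobSq (M * X l)) (Finset.mem_univ i)
      _ ≤ _ := hsub
  have hcont : Continuous fun M : Matrix α α ℝ => ∏ i, frobSq (M * X i) :=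
    continuous_finsetProd _ fun i _ =>
      continuous_frobSq.comp (continuous_id.matrix_mul continuous_const)
  refine hcont.continuousOn.exists_isMinOn'
    (isClosed_eq continuous_id.matrix_det continuous_const) (x₀ := 1) Matrix.det_one ?_
  filter_upwards [mem_inf_of_left (isCompact_frobSq_le _).compl_mem_cocompact,
    mem_inf_of_right (mem_principal_self _)] with M hlarge hM
  exact le_of_not_ge fun hsub => hlarge (hcoercive M hM hsub)

end InGeneralPosition

end Minimizer

section Stationarity

lemma card_le_sum_of_one_le_prod {ι : Type*} [Fintype ι] {y : ι → ℝ} (hy : ∀ i, 0 ≤ y i)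
    (h : 1 ≤ ∏ i, y i) : (Fintype.card ι : ℝ) ≤ ∑ i, y i := by
  have hne : ∀ i ∈ Finset.univ, y i ≠ 0 := Finset.prod_ne_zero_iff.1 (by linarith)
  calc (Fintype.card ι : ℝ) ≤ Real.log (∏ i, y i) + Fintype.card ι :=
        le_add_of_nonneg_left (Real.log_nonneg h)
    _ = ∑ i, (Real.log (y i) + 1) := by
        simp [Real.log_prod hne, Finset.sum_add_distrib]
    _ ≤ ∑ i, y i := Finset.sum_le_sum fun i hi => by
        linarith [Real.log_le_sub_one_of_pos ((hy i).lt_of_ne' (hne i hi))]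

variable {α ι : Type*} [Fintype α] [DecidableEq α]

lemma trace_one_add_vecMulVec_conj {S : Matrix α α ℝ} (hS : S.IsSymm) (u v : α → ℝ) :
    ((1 + vecMulVec u v) * S * (1 + vecMulVec u v)ᵀ).trace =
      S.trace + 2 * (v ⬝ᵥ S *ᵥ u) + (u ⬝ᵥ u) * (v ⬝ᵥ S *ᵥ v) := by
  have hcross_left : u ⬝ᵥ v ᵥ* S = v ⬝ᵥ S *ᵥ u := by
    rw [dotProduct_comm, ← Matrix.dotProduct_mulVec]
  have hcross_right : S *ᵥ v ⬝ᵥ u = v ⬝ᵥ S *ᵥ u := by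
    rw [← hcross_left, ← Matrix.mulVec_transpose, hS.eq, dotProduct_comm]
  rw [Matrix.transpose_add, Matrix.transpose_one, Matrix.transpose_vecMulVec, Matrix.add_mul,
    Matrix.one_mul, Matrix.mul_add, Matrix.mul_one, Matrix.add_mul, Matrix.vecMulVec_mul,
    Matrix.mul_vecMulVec, Matrix.vecMulVec_mul_vecMulVec]
  simp only [Matrix.trace_add, Matrix.trace_vecMulVec]
  rw [hcross_left, hcross_right, dotProduct_smul, ← Matrix.dotProduct_mulVec, smul_eq_mul]
  ring

/-- The competitors `1 + t u vᵀ` with `u ⊥ v` have determinant one; the linear term of the trace in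
`t` must vanish. -/
lemma dotProduct_mulVec_eq_zero_of_forall_trace_le {S : Matrix α α ℝ} (hS : S.IsSymm)
    (h : ∀ N : Matrix α α ℝ, N.det = 1 → S.trace ≤ (N * S * Nᵀ).trace) {u v : α → ℝ}
    (huv : u ⬝ᵥ v = 0) : v ⬝ᵥ S *ᵥ u = 0 := by
  have hquad : ∀ t : ℝ, 0 ≤ (u ⬝ᵥ u) * (v ⬝ᵥ S *ᵥ v) * (t * t) + 2 * (v ⬝ᵥ S *ᵥ u) * t + 0 := by
    intro t
    have hdet : (1 + vecMulVec (t • u) v).det = 1 := by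
      rw [Matrix.vecMulVec_eq Unit, Matrix.det_one_add_replicateCol_mul_replicateRow,
        dotProduct_smul, dotProduct_comm, huv, smul_zero, add_zero]
    have htrace := h _ hdet
    rw [trace_one_add_vecMulVec_conj hS] at htrace
    simp only [Matrix.mulVec_smul, dotProduct_smul, smul_dotProduct, smul_eq_mul] at htrace
    linarith
  have hdiscrim := discrim_le_zero hquad
  simp only [discrim, mul_zero, sub_zero] at hdiscrim
  simpa using sq_nonpos_iff _ |>.1 hdiscrim

lemma eq_smul_one_of_forall_trace_le {S : Matrix α α ℝ} (hS : S.IsSymm)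
    (h : ∀ N : Matrix α α ℝ, N.det = 1 → S.trace ≤ (N * S * Nᵀ).trace) :
    S = (S.trace / Fintype.card α) • 1 := by
  have hoff : ∀ a b, a ≠ b → S a b = 0 := fun a b hab => by
    simpa using dotProduct_mulVec_eq_zero_of_forall_trace_le hS h
      (u := Pi.single b 1) (v := Pi.single a 1) (by simp [hab])
  have hdiag : ∀ a b, S a a = S b b := fun a b => by
    rcases eq_or_ne a b with rfl | hab
    · rfl
    have := dotProduct_mulVec_eq_zero_of_forall_trace_le hS h
      (u := Pi.single a 1 + Pi.single b 1) (v := Pi.single a 1 - Pi.single b 1)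
      (by simp [hab, hab.symm])
    simp only [Matrix.mulVec_add, Matrix.mulVec_single, MulOpposite.op_one, one_smul,
      dotProduct_add, sub_dotProduct, single_dotProduct, Matrix.col_apply, one_mul, mul_zero,
      sub_zero, zero_sub, hoff a b hab, hoff b a hab.symm] at this
    linarith
  ext a b
  rcases eq_or_ne a b with rfl | hab
  · have : Nonempty α := ⟨a⟩
    have htrace : S.trace = Fintype.card α * S a a := by
      simp [Matrix.trace, fun c => hdiag c a]
    simp [htrace]
  · simp [hoff a b hab, hab]

variable [Fintype ι] {κ : ι → Type*} [∀ i, Fintype (κ i)]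

lemma sum_inv_frobSq_smul_eq_of_forall_prod_le {Y : ∀ i, Matrix α (κ i) ℝ}
    (hY : 0 < ∏ i, frobSq (Y i))
    (hmin : ∀ N : Matrix α α ℝ, N.det = 1 → ∏ i, frobSq (Y i) ≤ ∏ i, frobSq (N * Y i)) :
    ∑ i, (frobSq (Y i))⁻¹ • (Y i * (Y i)ᵀ) =
      ((Fintype.card ι : ℝ) / Fintype.card α) • (1 : Matrix α α ℝ) := by
  set S := ∑ i, (frobSq (Y i))⁻¹ • (Y i * (Y i)ᵀ) with hS
  have hne : ∀ i, frobSq (Y i) ≠ 0 := fun i =>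
    Finset.prod_ne_zero_iff.1 hY.ne' i (Finset.mem_univ i)
  have htrace : ∀ N : Matrix α α ℝ,
      (N * S * Nᵀ).trace = ∑ i, frobSq (N * Y i) / frobSq (Y i) := fun N => by
    simp [hS, Matrix.mul_sum, Matrix.sum_mul, Matrix.trace_sum, frobSq_mul_eq_trace, div_eq_inv_mul]
  have hcard : S.trace = Fintype.card ι := by
    simpa [hne] using htrace 1
  rw [← hcard]
  refine eq_smul_one_of_forall_trace_le ?_ fun N hN => ?_
  · simp [Matrix.IsSymm, hS, Matrix.transpose_sum]
  · rw [hcard, htrace]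
    refine card_le_sum_of_one_le_prod
      (fun i => div_nonneg (frobSq_nonneg _) (frobSq_nonneg _)) ?_
    rw [Finset.prod_div_distrib, one_le_div hY]
    exact hmin N hN

end Stationarity

section EqualNormParseval

open scoped MatrixOrder in
lemma exists_posSemidef_gram_eq {α : Type*} [Fintype α] (M : Matrix α α ℝ) :
    ∃ P : Matrix α α ℝ, P.PosSemidef ∧ Pᵀ * P = Mᵀ * M := by
  classical
  have hnonneg : 0 ≤ Mᵀ * M := (Matrix.posSemidef_conjTranspose_mul_self M).nonneg
  have hP := Matrix.nonneg_iff_posSemidef.1 (CFC.sqrt_nonneg (Mᵀ * M))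
  refine ⟨CFC.sqrt (Mᵀ * M), hP, ?_⟩
  have hsymm : (CFC.sqrt (Mᵀ * M))ᵀ = CFC.sqrt (Mᵀ * M) := hP.isHermitian
  rw [hsymm, CFC.sqrt_mul_sqrt_self _ hnonneg]

variable {α ι : Type*} [Fintype α] [DecidableEq α] [Fintype ι]
  {κ : ι → Type*} [∀ i, Fintype (κ i)]

/-- Equal-norm Parseval matrix frames with arbitrary finite index types; see `EqualNormParseval`
for the case of matrices indexed by `Fin`. -/
def IsEqualNormParseval (W : ∀ i, Matrix α (κ i) ℝ) : Prop :=
  ∑ i, W i * (W i)ᵀ = 1 ∧ ∀ i, frobSq (W i) = (Fintype.card α : ℝ) / Fintype.card ι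

lemma isEqualNormParseval_sqrt_smul [Nonempty α] [Nonempty ι] {Y : ∀ i, Matrix α (κ i) ℝ}
    (hpos : ∀ i, 0 < frobSq (Y i))
    (hY : ∑ i, (frobSq (Y i))⁻¹ • (Y i * (Y i)ᵀ) =
      ((Fintype.card ι : ℝ) / Fintype.card α) • (1 : Matrix α α ℝ)) :
    IsEqualNormParseval fun i =>
      √((Fintype.card α : ℝ) / Fintype.card ι / frobSq (Y i)) • Y i := by
  have hsq : ∀ i, √((Fintype.card α : ℝ) / Fintype.card ι / frobSq (Y i)) ^ 2 =
      (Fintype.card α : ℝ) / Fintype.card ι * (frobSq (Y i))⁻¹ := fun i =>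
    Real.sq_sqrt (div_nonneg (by positivity) (hpos i).le)
  refine ⟨?_, fun i => ?_⟩
  · calc ∑ i, (√((Fintype.card α : ℝ) / Fintype.card ι / frobSq (Y i)) • Y i) *
          (√((Fintype.card α : ℝ) / Fintype.card ι / frobSq (Y i)) • Y i)ᵀ
      _ = ((Fintype.card α : ℝ) / Fintype.card ι) •
          ∑ i, (frobSq (Y i))⁻¹ • (Y i * (Y i)ᵀ) := by
        rw [Finset.smul_sum]
        refine Finset.sum_congr rfl fun i _ => ?_
        rw [Matrix.transpose_smul, Matrix.smul_mul, Matrix.mul_smul, smul_smul, smul_smul, ← sq,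
          hsq]
      _ = 1 := by
        rw [hY, smul_smul, div_mul_div_cancel₀ (by positivity), div_self (by positivity), one_smul]
  · rw [frobSq_smul, hsq, mul_assoc, inv_mul_cancel₀ (hpos i).ne', mul_one]

lemma IsEqualNormParseval.of_gram_eq {M P : Matrix α α ℝ} (hPM : Pᵀ * P = Mᵀ * M)
    {Z : ∀ i, Matrix α (κ i) ℝ} (h : IsEqualNormParseval fun i => M * Z i) :
    IsEqualNormParseval fun i => P * Z i := by
  have hconj : ∀ A : Matrix α α ℝ,
      ∑ i, (A * Z i) * (A * Z i)ᵀ = A * ((∑ i, Z i * (Z i)ᵀ) * Aᵀ) := fun A => by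
    simp only [Matrix.transpose_mul, Matrix.mul_sum, Matrix.sum_mul, Matrix.mul_assoc]
  refine ⟨?_, fun i => (frobSq_mul_eq_of_gram_eq hPM (Z i)).trans (h.2 i)⟩
  rw [hconj, mul_eq_one_comm, Matrix.mul_assoc, hPM, ← Matrix.mul_assoc, mul_eq_one_comm, ← hconj,
    h.1]

lemma InGeneralPosition.exists_isEqualNormParseval_smul_mul [Nonempty α]
    {X : ∀ i, Matrix α (κ i) ℝ} {k : ∀ i, κ i}
    (hX : InGeneralPosition fun i => (X i).col (k i))
    (hcard : Fintype.card α < Fintype.card ι) :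
    ∃ (P : Matrix α α ℝ) (t : ι → ℝ), P.PosSemidef ∧ (∀ i, 0 ≤ t i) ∧
      IsEqualNormParseval fun i => t i • (P * X i) := by
  have : Nonempty ι := Fintype.card_pos_iff.1 (by lia)
  obtain ⟨M, (hM : M.det = 1), hmin⟩ := hX.exists_isMinOn_prod_frobSq hcard
  have hprod : 0 < ∏ i, frobSq (M * X i) := hX.prod_frobSq_mul_pos hcard.le hM
  have hpos : ∀ i, 0 < frobSq (M * X i) := fun i => (frobSq_nonneg _).lt_of_ne'
    (Finset.prod_ne_zero_iff.1 hprod.ne' i (Finset.mem_univ i))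
  have hstationary := sum_inv_frobSq_smul_eq_of_forall_prod_le hprod fun N hN => by
    have hNM : (N * M).det = 1 := by rw [Matrix.det_mul, hN, hM, one_mul]
    simpa only [Matrix.mul_assoc] using isMinOn_iff.1 hmin (N * M) hNM
  obtain ⟨P, hP, hPM⟩ := exists_posSemidef_gram_eq M
  refine ⟨P, fun i => √((Fintype.card α : ℝ) / Fintype.card ι / frobSq (M * X i)), hP,
    fun i => Real.sqrt_nonneg _, ?_⟩
  simp only [← Matrix.mul_smul]
  refine IsEqualNormParseval.of_gram_eq hPM ?_
  simpa only [Matrix.mul_smul] using isEqualNormParseval_sqrt_smul hpos hstationary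

end EqualNormParseval

section Limit

lemma exists_mem_of_mem_closure {X Y : Type*} [TopologicalSpace X] [TopologicalSpace Y]
    {K : Set Y} (hK : IsCompact K) {C : Set (X × Y)} (hC : IsClosed C) {S : Set X}
    (h : ∀ z ∈ S, ∃ y ∈ K, (z, y) ∈ C) {x : X} (hx : x ∈ closure S) : ∃ y ∈ K, (x, y) ∈ C := by
  have : CompactSpace K := isCompact_iff_compactSpace.1 hK
  have hclosed : IsClosed (Prod.fst '' {p : X × K | (p.1, (p.2 : Y)) ∈ C}) :=
    isClosedMap_fst_of_compactSpace _
      (hC.preimage (continuous_fst.prodMk (continuous_subtype_val.comp continuous_snd)))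
  have hsub : S ⊆ Prod.fst '' {p : X × K | (p.1, (p.2 : Y)) ∈ C} := fun z hz =>
    let ⟨y, hy, hzy⟩ := h z hz
    ⟨(z, ⟨y, hy⟩), hzy, rfl⟩
  obtain ⟨⟨_, y⟩, hy, rfl⟩ := closure_minimal hsub hclosed hx
  exact ⟨y, y.2, hy⟩

lemma continuous_sum_mul_transpose {α ι : Type*} [Fintype ι] {κ : ι → Type*}
    [∀ i, Fintype (κ i)] :
    Continuous fun F : ∀ i, Matrix α (κ i) ℝ => ∑ i, F i * (F i)ᵀ :=
  continuous_finsetSum _ fun i _ =>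
    (continuous_apply i).matrix_mul (continuous_apply i).matrix_transpose

variable {α ι : Type*} [Fintype α] [DecidableEq α]

open scoped Matrix.Norms.L2Operator in
lemma posSemidef_l2_opNorm_smul_one_sub {E : Matrix α α ℝ} (hE : E.IsHermitian) :
    (‖E‖ • 1 - E).PosSemidef := by
  refine .of_dotProduct_mulVec_nonneg ((Matrix.isHermitian_one.smul (.all _)).sub hE) fun x => ?_
  have hx : x ⬝ᵥ E *ᵥ x ≤ ‖E‖ * (x ⬝ᵥ x) :=
    calc x ⬝ᵥ E *ᵥ x
      _ = inner ℝ (WithLp.toLp 2 x) (Matrix.toEuclideanCLM (𝕜 := ℝ) E (WithLp.toLp 2 x)) :=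
          (Matrix.inner_toEuclideanCLM E _ _).symm
      _ ≤ ‖WithLp.toLp 2 x‖ * (‖E‖ * ‖WithLp.toLp 2 x‖) :=
          (real_inner_le_norm _ _).trans (mul_le_mul_of_nonneg_left
            ((Matrix.toEuclideanCLM (𝕜 := ℝ) E).le_opNorm _) (norm_nonneg _))
      _ = ‖E‖ * (x ⬝ᵥ x) := by
          rw [mul_left_comm, ← sq, EuclideanSpace.real_norm_sq_eq]
          simp [dotProduct, sq]
  simpa [Matrix.sub_mulVec, Matrix.smul_mulVec] using hx

variable [Fintype ι] {κ : ι → Type*} [∀ i, Fintype (κ i)]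

lemma isCompact_isEqualNormParseval :
    IsCompact {W : ∀ i, Matrix α (κ i) ℝ | IsEqualNormParseval W} := by
  have hclosed : IsClosed {W : ∀ i, Matrix α (κ i) ℝ |
      ∀ i, frobSq (W i) = (Fintype.card α : ℝ) / Fintype.card ι} := by
    simp only [Set.ofPred_forall]
    exact isClosed_iInter fun i =>
      isClosed_eq (continuous_frobSq.comp (continuous_apply i)) continuous_const
  refine (isCompact_univ_pi fun i =>
    isCompact_frobSq_le (α := α) (β := κ i) (Fintype.card α / Fintype.card ι)).of_isClosed_subset
    ?_ fun W hW i _ => (hW.2 i).le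
  exact (isClosed_eq continuous_sum_mul_transpose continuous_const).inter hclosed

end Limit

section Paulsen

variable {α ι : Type*} [Fintype α] [DecidableEq α] [Nonempty α] [Fintype ι]
  {κ : ι → Type*} [∀ i, Fintype (κ i)]

lemma InGeneralPosition.exists_isEqualNormParseval_near {F : ∀ i, Matrix α (κ i) ℝ} {k : ∀ i, κ i}
    (hF : InGeneralPosition fun i => (F i).col (k i))
    (hcard : Fintype.card α < Fintype.card ι) {η : ℝ} (hη : 0 ≤ η)
    (hop : ((1 + η) • (1 : Matrix α α ℝ) - ∑ i, F i * (F i)ᵀ).PosSemidef) :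
    ∃ W : ∀ i, Matrix α (κ i) ℝ, IsEqualNormParseval W ∧
      ∑ i, frobSq (F i - W i) ≤ 2 * η * (Fintype.card α : ℝ) ^ 2 + (2 * Fintype.card α + 1) *
        ∑ i, |frobSq (F i) - (Fintype.card α : ℝ) / Fintype.card ι| := by
  obtain ⟨P, t, hP, ht, hW⟩ := hF.exists_isEqualNormParseval_smul_mul hcard
  refine ⟨_, hW, ?_⟩
  simpa only [hW.2] using sum_frobSq_sub_smul_mul_le hP ht F hη
    (by simpa only [hW.1, add_smul, one_smul] using hop)

open scoped Matrix.Norms.L2Operator in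
theorem exists_isEqualNormParseval_near [∀ i, Nonempty (κ i)]
    (hcard : Fintype.card α < Fintype.card ι) (F : ∀ i, Matrix α (κ i) ℝ) {η : ℝ} (hη : 0 ≤ η)
    (hop : ((1 + η) • (1 : Matrix α α ℝ) - ∑ i, F i * (F i)ᵀ).PosSemidef) :
    ∃ W : ∀ i, Matrix α (κ i) ℝ, IsEqualNormParseval W ∧
      ∑ i, frobSq (F i - W i) ≤ 2 * η * (Fintype.card α : ℝ) ^ 2 + (2 * Fintype.card α + 1) *
        ∑ i, |frobSq (F i) - (Fintype.card α : ℝ) / Fintype.card ι| := by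
  let k : ∀ i, κ i := fun i => Classical.arbitrary (κ i)
  let η' : (∀ i, Matrix α (κ i) ℝ) → ℝ := fun G => η + ‖∑ i, G i * (G i)ᵀ - ∑ i, F i * (F i)ᵀ‖
  have hη' : ∀ G, 0 ≤ η' G := fun G => add_nonneg hη (norm_nonneg _)
  have hop' : ∀ G, ((1 + η' G) • (1 : Matrix α α ℝ) - ∑ i, G i * (G i)ᵀ).PosSemidef := by
    intro G
    have hherm : (∑ i, G i * (G i)ᵀ - ∑ i, F i * (F i)ᵀ).IsHermitian := by
      simp [Matrix.IsHermitian, Matrix.conjTranspose_eq_transpose_of_trivial,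
        Matrix.transpose_sum]
    convert hop.add (posSemidef_l2_opNorm_smul_one_sub hherm) using 1
    simp only [η', add_smul]
    abel
  have hcont : Continuous η' := continuous_const.add
    (continuous_sum_mul_transpose.sub continuous_const).norm
  let C : Set ((∀ i, Matrix α (κ i) ℝ) × ∀ i, Matrix α (κ i) ℝ) :=
    {p | ∑ i, frobSq (p.1 i - p.2 i) ≤ 2 * η' p.1 * (Fintype.card α : ℝ) ^ 2 +
      (2 * Fintype.card α + 1) *
        ∑ i, |frobSq (p.1 i) - (Fintype.card α : ℝ) / Fintype.card ι|}
  have hC : IsClosed C := by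
    have hfrob : ∀ i, Continuous (frobSq : Matrix α (κ i) ℝ → ℝ) := fun i => continuous_frobSq
    refine isClosed_le ?_ ?_ <;> fun_prop
  obtain ⟨W, hW, hdist⟩ := exists_mem_of_mem_closure isCompact_isEqualNormParseval hC
    (fun G hG => InGeneralPosition.exists_isEqualNormParseval_near hG hcard (hη' G) (hop' G))
    (mem_closure_inGeneralPosition k F)
  exact ⟨W, hW, by simpa [C, η'] using hdist⟩

theorem paulsen_matrix_frames_general [∀ i, Nonempty (κ i)]
    (hcard : Fintype.card α < Fintype.card ι) (F : ∀ i, Matrix α (κ i) ℝ) {ε : ℝ}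
    (hop : ((1 + ε) • (1 : Matrix α α ℝ) - ∑ i, F i * (F i)ᵀ).PosSemidef)
    (hnorm : ∀ i, |frobSq (F i) - (Fintype.card α : ℝ) / Fintype.card ι| ≤
      ε * ((Fintype.card α : ℝ) / Fintype.card ι)) :
    ∃ W : ∀ i, Matrix α (κ i) ℝ, IsEqualNormParseval W ∧
      ∑ i, frobSq (F i - W i) ≤ 5 * ε * (Fintype.card α : ℝ) ^ 2 := by
  have hι : 0 < Fintype.card ι := by lia
  have : Nonempty ι := Fintype.card_pos_iff.1 hι
  have hα : (1 : ℝ) ≤ Fintype.card α := by exact_mod_cast Fintype.card_pos (α := α)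
  have hε : 0 ≤ ε := nonneg_of_mul_nonneg_left
    ((abs_nonneg _).trans (hnorm (Classical.arbitrary ι))) (by positivity)
  have hsum : ∑ i, |frobSq (F i) - (Fintype.card α : ℝ) / Fintype.card ι| ≤
      ε * Fintype.card α :=
    calc ∑ i, |frobSq (F i) - (Fintype.card α : ℝ) / Fintype.card ι|
      _ ≤ ∑ _i : ι, ε * ((Fintype.card α : ℝ) / Fintype.card ι) :=
          Finset.sum_le_sum fun i _ => hnorm i
      _ = ε * Fintype.card α := by
          rw [Finset.sum_const, Finset.card_univ, nsmul_eq_mul]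
          field_simp
  obtain ⟨W, hW, hdist⟩ := exists_isEqualNormParseval_near hcard F hε hop
  refine ⟨W, hW, hdist.trans ?_⟩
  calc 2 * ε * (Fintype.card α : ℝ) ^ 2 + (2 * Fintype.card α + 1) *
        ∑ i, |frobSq (F i) - (Fintype.card α : ℝ) / Fintype.card ι|
    _ ≤ 2 * ε * (Fintype.card α : ℝ) ^ 2 + (2 * Fintype.card α + 1) * (ε * Fintype.card α) := by
        gcongr
    _ = 4 * ε * (Fintype.card α : ℝ) ^ 2 + ε * Fintype.card α * 1 := by ring
    _ ≤ 4 * ε * (Fintype.card α : ℝ) ^ 2 + ε * Fintype.card α * Fintype.card α := by gcongr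
    _ = 5 * ε * (Fintype.card α : ℝ) ^ 2 := by ring

end Paulsen

section Fin

variable {d n : ℕ} {m : Fin n → ℕ} {F : ∀ i : Fin n, Matrix (Fin d) (Fin (m i)) ℝ}

lemma equalNormParseval_iff : EqualNormParseval F ↔ IsEqualNormParseval F := by
  simp [EqualNormParseval, IsEqualNormParseval, frameOp]

namespace NearlyENParseval

variable {ε : ℝ}

lemma abs_frobSq_sub_le (hF : NearlyENParseval ε F) (i : Fin n) :
    |frobSq (F i) - (d : ℝ) / n| ≤ ε * ((d : ℝ) / n) :=
  abs_le.2 ⟨by linarith [(hF.2.2 i).1], by linarith [(hF.2.2 i).2]⟩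

lemma nonempty [NeZero d] (hF : NearlyENParseval ε F) (hε : ε < 1) (i : Fin n) :
    Nonempty (Fin (m i)) := by
  have hn : 0 < n := i.pos
  have hd : 0 < d := NeZero.pos d
  exact nonempty_of_frobSq_pos ((mul_pos (sub_pos.2 hε) (by positivity)).trans_le (hF.2.2 i).1)

end NearlyENParseval

end Fin

/-- **Paulsen's problem for matrix frames.**  Every `ε`-nearly equal-norm Parseval matrix
frame (`ε < 0.3`, `n > d`) is within squared distance `26 ε d²` of an equal-norm Parseval
matrix frame. -/
theorem paulsen_matrix_frames {d n : ℕ} (hd : 0 < d) (hdn : d < n) {m : Fin n → ℕ}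
    {ε : ℝ} (hε0 : 0 < ε) (hε : ε < 0.3)
    (F : ∀ i : Fin n, Matrix (Fin d) (Fin (m i)) ℝ)
    (hF : NearlyENParseval ε F) :
    ∃ W : ∀ i : Fin n, Matrix (Fin d) (Fin (m i)) ℝ,
      EqualNormParseval W ∧ dist2 F W ≤ 26 * ε * (d : ℝ) ^ 2 := by
  have : NeZero d := ⟨hd.ne'⟩
  have : ∀ i, Nonempty (Fin (m i)) := hF.nonempty (hε.trans (by norm_num))
  obtain ⟨W, hW, hdist⟩ := paulsen_matrix_frames_general (by simpa using hdn) F hF.2.1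
    (by simpa using hF.abs_frobSq_sub_le)
  refine ⟨W, equalNormParseval_iff.2 hW, hdist.trans ?_⟩
  rw [Fintype.card_fin]
  gcongr
  norm_num

end MFrames
end

section
/- Let F = (X_1, …, X_n) with X_i ∈ ℝ^{d×d_i} be a matrix frame. For every c ∈ ℚ^n with all coordinates positive, the value f_F(c) is finite (i.e. f_F(c) > −∞) if and only if c ∈ K_F. In other words, the domain of the restriction of f_F to ℚ^n_{>0} is exactly K_F ∩ ℚ^n_{>0}. -/
open scoped BigOperators
open Matrix

/-!
By Cauchy–Binet, `det (∑ e^{tᵢ} Xᵢ Xᵢᵀ)` is a sum of squared maximal minors of `[X₁ | … | Xₙ]`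
weighted by `e^{t(B)}`, where `t(B)` is the total weight of the chosen columns `B`. The sum is
within constant factors of its largest term, so `Φ_F` stays within bounded distance of
`t ↦ max {t(B) : B a basis of columns}`. This maximum is positively homogeneous, hence
`Φ_F(t) - ⟨t, c⟩` is bounded below exactly when `⟨t, c⟩ ≤ max_B t(B)` for all `t`.

These inequalities cut out `K_F`, as in Edmonds' theorem on matroid base polytopes: `t = ± 𝟙`,
`t = -eᵢ` and `t = 𝟙_I` give the defining inequalities, and conversely the columns of weight `≥ τ`
in a maximum-weight basis span all columns of weight `≥ τ`, so that the inequalities of `K_F` for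
the superlevel sets of `t` add up, by Abel summation, to the one for `t`.
-/

namespace MFrames

open Finset

section MaximalMinors

variable {R ι κ : Type*} [CommRing R] [Fintype ι] [DecidableEq ι]

theorem det_submatrix_smul_row (X : Matrix κ ι R) (p : ι → κ) (k : κ) :
    (X.submatrix p id).det • X k =
      ∑ j, (X.submatrix (Function.update p j k) id).det • X (p j) := by
  have cramer_eq (j : ι) : (X.submatrix p id)ᵀ.cramer (X k) j =
      (X.submatrix (Function.update p j k) id).det := by
    rw [cramer_transpose_apply]
    congr 1
    ext a b
    obtain rfl | h := eq_or_ne a j <;> simp [*]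
  rw [← det_transpose, ← mulVec_cramer]
  ext r
  simp [mulVec, dotProduct, ← cramer_eq, mul_comm, -transpose_submatrix]

variable [Fintype κ]

theorem det_mul_eq_sum_prod_mul_det (A : Matrix ι κ R) (B : Matrix κ ι R) :
    (A * B).det = ∑ p : ι → κ, (∏ j, B (p j) j) * (A.submatrix id p).det := by
  simp only [det_apply', mul_apply, prod_univ_sum, mul_sum, Fintype.piFinset_univ]
  rw [sum_comm]
  refine sum_congr rfl fun p _ ↦ sum_congr rfl fun σ _ ↦ ?_
  simp only [submatrix_apply, id_eq, prod_mul_distrib]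
  ring

/-- The Cauchy–Binet formula: the sum runs over all maps `p`, so every choice of rows is counted
once per ordering. -/
theorem factorial_mul_det_mul (A : Matrix ι κ R) (B : Matrix κ ι R) :
    ((Fintype.card ι).factorial : R) * (A * B).det =
      ∑ p : ι → κ, (A.submatrix id p).det * (B.submatrix p id).det := by
  have det_mul_eq_sum_comp (σ : Equiv.Perm ι) : (A * B).det =
      ∑ p : ι → κ, (A.submatrix id p).det * (Equiv.Perm.sign σ * ∏ j, B (p (σ j)) j) := by
    rw [det_mul_eq_sum_prod_mul_det, ← (σ.symm.arrowCongr (Equiv.refl κ)).sum_comp]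
    refine sum_congr rfl fun p _ ↦ ?_
    have : (A.submatrix id (p ∘ σ)).det = Equiv.Perm.sign σ * (A.submatrix id p).det :=
      det_permute' σ (A.submatrix id p)
    change (∏ j, B (p (σ j)) j) * (A.submatrix id (p ∘ σ)).det = _
    rw [this]
    ring
  calc ((Fintype.card ι).factorial : R) * (A * B).det
      = ∑ _σ : Equiv.Perm ι, (A * B).det := by simp [Fintype.card_perm]
    _ = ∑ σ : Equiv.Perm ι, ∑ p : ι → κ,
          (A.submatrix id p).det * (Equiv.Perm.sign σ * ∏ j, B (p (σ j)) j) :=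
        sum_congr rfl fun σ _ ↦ det_mul_eq_sum_comp σ
    _ = ∑ p : ι → κ, (A.submatrix id p).det * (B.submatrix p id).det := by
        rw [sum_comm]
        simp only [← mul_sum, det_apply', submatrix_apply, id_eq]

theorem factorial_mul_det_transpose_mul_diagonal_mul [DecidableEq κ] (X : Matrix κ ι R)
    (w : κ → R) :
    ((Fintype.card ι).factorial : R) * (Xᵀ * diagonal w * X).det =
      ∑ p : ι → κ, (∏ j, w (p j)) * (X.submatrix p id).det ^ 2 := by
  rw [factorial_mul_det_mul]
  refine sum_congr rfl fun p _ ↦ ?_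
  have : (Xᵀ * diagonal w).submatrix id p = (X.submatrix p id)ᵀ * diagonal (w ∘ p) := by
    ext; simp
  rw [this, det_mul, det_transpose, det_diagonal]
  simp only [Function.comp_apply]
  ring

end MaximalMinors

section RowBasis

variable {K ι κ : Type*} [Field K] [Fintype ι] [DecidableEq ι]

/-- The row bases of `X`: choices of rows, indexed by the columns of `X`, that form a basis of
`K^ι`, encoded by the non-vanishing of the corresponding maximal minor. -/
abbrev RowBasis (X : Matrix κ ι K) : Type _ := {p : ι → κ // (X.submatrix p id).det ≠ 0}

theorem nonempty_rowBasis_of_det_mul_ne_zero [Fintype κ] {X B : Matrix κ ι K}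
    (h : (Xᵀ * B).det ≠ 0) : Nonempty (RowBasis X) := by
  rw [det_mul_eq_sum_prod_mul_det] at h
  obtain ⟨p, -, hp⟩ := exists_ne_zero_of_sum_ne_zero h
  refine ⟨p, ?_⟩
  rw [← det_transpose]
  exact right_ne_zero_of_mul hp

theorem RowBasis.card_filter_mem_le_finrank_span {X : Matrix κ ι K} (p : RowBasis X) (S : Set κ)
    [DecidablePred (· ∈ S)] :
    #{j | p.1 j ∈ S} ≤ Module.finrank K (Submodule.span K (X '' S)) := by
  have indep : LinearIndependent K fun j : {j // p.1 j ∈ S} ↦ X (p.1 j) :=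
    (linearIndependent_rows_of_det_ne_zero p.2).comp _ Subtype.val_injective
  rw [← Fintype.card_subtype, ← finrank_span_eq_card indep]
  refine Submodule.finrank_mono (Submodule.span_mono ?_)
  rintro _ ⟨j, rfl⟩
  exact ⟨p.1 j, j.2, rfl⟩

variable {M : Type*} [AddCommMonoid M] [LinearOrder M] [IsOrderedCancelAddMonoid M]

/-- Otherwise exchanging a lighter element of `p` for the row `k` would increase the weight. -/
theorem RowBasis.row_mem_span_of_forall_sum_le {X : Matrix κ ι K} {t : κ → M} {p : RowBasis X}
    (hp : ∀ q : RowBasis X, ∑ j, t (q.1 j) ≤ ∑ j, t (p.1 j)) (k : κ) :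
    X k ∈ Submodule.span K ((fun j ↦ X (p.1 j)) '' {j | t k ≤ t (p.1 j)}) := by
  classical
  have det_update_eq_zero (j : ι) (hj : t (p.1 j) < t k) :
      (X.submatrix (Function.update p.1 j k) id).det = 0 := by
    by_contra hdet
    refine (hp ⟨_, hdet⟩).not_gt (sum_lt_sum (fun i _ ↦ ?_) ⟨j, mem_univ j, by simpa using hj⟩)
    obtain rfl | h := eq_or_ne i j
    · simpa using hj.le
    · simp [h]
  rw [← Submodule.smul_mem_iff _ (s := (X.submatrix p.1 id).det) p.2, det_submatrix_smul_row]
  refine Submodule.sum_mem _ fun j _ ↦ ?_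
  obtain hj | hj := le_or_gt (t k) (t (p.1 j))
  · exact Submodule.smul_mem _ _ (Submodule.subset_span ⟨j, hj, rfl⟩)
  · simp [det_update_eq_zero j hj]

theorem RowBasis.finrank_span_le_card_of_forall_sum_le {X : Matrix κ ι K} {t : κ → M}
    {p : RowBasis X} (hp : ∀ q : RowBasis X, ∑ j, t (q.1 j) ≤ ∑ j, t (p.1 j)) (τ : M) :
    Module.finrank K (Submodule.span K (X '' {k | τ ≤ t k})) ≤ #{j | τ ≤ t (p.1 j)} := by
  classical
  have span_le : Submodule.span K (X '' {k | τ ≤ t k}) ≤ Submodule.span K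
      (({j | τ ≤ t (p.1 j)} : Finset ι).image (fun j ↦ X (p.1 j)) : Finset (ι → K)) := by
    rw [Submodule.span_le]
    rintro _ ⟨k, hk, rfl⟩
    refine Submodule.span_mono ?_ (p.row_mem_span_of_forall_sum_le hp k)
    rintro _ ⟨j, hj, rfl⟩
    simpa using ⟨j, le_trans hk hj, rfl⟩
  exact (Submodule.finrank_mono span_le).trans
    ((finrank_span_finset_le_card _).trans card_image_le)

end RowBasis

section MaxWeight

variable {ι κ : Type*} [Fintype ι] [DecidableEq ι]

/-- The maximum total weight of a row basis of `X`, when row `k` has weight `t k`. As a real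
supremum, it is `0` if `X` has no row basis. -/
noncomputable def maxWeight (X : Matrix κ ι ℝ) (t : κ → ℝ) : ℝ :=
  ⨆ p : RowBasis X, ∑ j, t (p.1 j)

theorem maxWeight_smul (X : Matrix κ ι ℝ) {s : ℝ} (hs : 0 ≤ s) (t : κ → ℝ) :
    maxWeight X (s • t) = s * maxWeight X t := by
  simp [maxWeight, Real.mul_iSup_of_nonneg hs, mul_sum]

theorem le_maxWeight [Finite κ] {X : Matrix κ ι ℝ} (t : κ → ℝ) (p : RowBasis X) :
    ∑ j, t (p.1 j) ≤ maxWeight X t :=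
  le_ciSup (f := fun p : RowBasis X ↦ ∑ j, t (p.1 j)) (Set.finite_range _).bddAbove p

theorem exists_eq_maxWeight [Finite κ] (X : Matrix κ ι ℝ) [Nonempty (RowBasis X)] (t : κ → ℝ) :
    ∃ p : RowBasis X, ∑ j, t (p.1 j) = maxWeight X t :=
  exists_eq_ciSup_of_finite

variable [Fintype κ] [DecidableEq κ]

theorem exists_exp_maxWeight_le_det (X : Matrix κ ι ℝ) [Nonempty (RowBasis X)] :
    ∃ a > 0, ∀ t : κ → ℝ, a * Real.exp (maxWeight X t) ≤
      (Xᵀ * diagonal (fun k ↦ Real.exp (t k)) * X).det := by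
  obtain ⟨p₀, hp₀⟩ := Finite.exists_min fun p : RowBasis X ↦ (X.submatrix p.1 id).det ^ 2
  have fact_pos : (0 : ℝ) < (Fintype.card ι).factorial := by positivity
  refine ⟨(X.submatrix p₀.1 id).det ^ 2 / (Fintype.card ι).factorial,
    div_pos (pow_two_pos_of_ne_zero p₀.2) fact_pos, fun t ↦ ?_⟩
  obtain ⟨p, hp⟩ := exists_eq_maxWeight X t
  rw [div_mul_eq_mul_div, div_le_iff₀' fact_pos, factorial_mul_det_transpose_mul_diagonal_mul]
  calc (X.submatrix p₀.1 id).det ^ 2 * Real.exp (maxWeight X t)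
      ≤ (X.submatrix p.1 id).det ^ 2 * Real.exp (maxWeight X t) := by gcongr ?_ * _; exact hp₀ p
    _ = (∏ j, Real.exp (t (p.1 j))) * (X.submatrix p.1 id).det ^ 2 := by
        rw [← hp, Real.exp_sum, mul_comm]
    _ ≤ ∑ q : ι → κ, (∏ j, Real.exp (t (q j))) * (X.submatrix q id).det ^ 2 :=
        single_le_sum (f := fun q : ι → κ ↦ (∏ j, Real.exp (t (q j))) * (X.submatrix q id).det ^ 2)
          (fun q _ ↦ by positivity) (mem_univ p.1)

theorem exists_det_le_exp_maxWeight (X : Matrix κ ι ℝ) :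
    ∃ b > 0, ∀ t : κ → ℝ, (Xᵀ * diagonal (fun k ↦ Real.exp (t k)) * X).det ≤
      b * Real.exp (maxWeight X t) := by
  have fact_pos : (0 : ℝ) < (Fintype.card ι).factorial := by positivity
  refine ⟨(1 + ∑ p : ι → κ, (X.submatrix p id).det ^ 2) / (Fintype.card ι).factorial,
    by positivity, fun t ↦ ?_⟩
  have term_le (p : ι → κ) : (∏ j, Real.exp (t (p j))) * (X.submatrix p id).det ^ 2 ≤
      (X.submatrix p id).det ^ 2 * Real.exp (maxWeight X t) := by
    obtain hp | hp := eq_or_ne (X.submatrix p id).det 0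
    · simp [hp]
    · rw [← Real.exp_sum, mul_comm]
      gcongr
      exact le_maxWeight t ⟨p, hp⟩
  rw [div_mul_eq_mul_div, le_div_iff₀' fact_pos, factorial_mul_det_transpose_mul_diagonal_mul]
  calc ∑ p : ι → κ, (∏ j, Real.exp (t (p j))) * (X.submatrix p id).det ^ 2
      ≤ ∑ p : ι → κ, (X.submatrix p id).det ^ 2 * Real.exp (maxWeight X t) :=
        sum_le_sum fun p _ ↦ term_le p
    _ ≤ (1 + ∑ p : ι → κ, (X.submatrix p id).det ^ 2) * Real.exp (maxWeight X t) := by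
        rw [← sum_mul]
        gcongr
        linarith

theorem exists_abs_log_det_sub_maxWeight_le (X : Matrix κ ι ℝ) [Nonempty (RowBasis X)] :
    ∃ C, ∀ t : κ → ℝ,
      |Real.log (Xᵀ * diagonal (fun k ↦ Real.exp (t k)) * X).det - maxWeight X t| ≤ C := by
  obtain ⟨a, a_pos, ha⟩ := exists_exp_maxWeight_le_det X
  obtain ⟨b, b_pos, hb⟩ := exists_det_le_exp_maxWeight X
  refine ⟨max (-Real.log a) (Real.log b), fun t ↦ abs_le.2 ?_⟩
  have lower := Real.log_le_log (by positivity) (ha t)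
  have upper := Real.log_le_log (lt_of_lt_of_le (by positivity) (ha t)) (hb t)
  rw [Real.log_mul (by positivity) (by positivity), Real.log_exp] at lower upper
  constructor
  · linarith [le_max_left (-Real.log a) (Real.log b)]
  · linarith [le_max_right (-Real.log a) (Real.log b)]

end MaxWeight

theorem bddBelow_range_iff_nonneg_of_abs_sub_le {E : Type*} [SMul ℝ E] {f g : E → ℝ} {C : ℝ}
    (hg : ∀ s : ℝ, 0 ≤ s → ∀ t, g (s • t) = s * g t) (hfg : ∀ t, |f t - g t| ≤ C) :
    BddBelow (Set.range f) ↔ ∀ t, 0 ≤ g t := by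
  constructor
  · rintro ⟨B, hB⟩ t
    by_contra! ht
    obtain ⟨k, hk⟩ := Archimedean.arch (C - B + 1) (neg_pos.2 ht)
    have lower : B ≤ f ((k : ℝ) • t) := hB ⟨_, rfl⟩
    have upper := (abs_le.1 (hfg ((k : ℝ) • t))).2
    rw [hg k k.cast_nonneg] at upper
    rw [nsmul_eq_mul] at hk
    linarith
  · intro hpos
    refine ⟨-C, ?_⟩
    rintro _ ⟨t, rfl⟩
    linarith [hpos t, (abs_le.1 (hfg t)).1]

section AbelSummation

variable {R ι : Type*} [CommRing R] [LinearOrder R] [IsStrictOrderedRing R]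

theorem sum_sub_mul_nonpos_of_superlevel (s : Finset ι) (a w : ι → R) {M : R}
    (hM : ∀ i ∈ s, M ≤ a i) (hw : ∀ τ, M < τ → ∑ i ∈ s with τ ≤ a i, w i ≤ 0) :
    ∑ i ∈ s, (a i - M) * w i ≤ 0 := by
  classical
  induction s using induction_on_min_value a generalizing M with
  | empty => simp
  | insert k s hk k_min ih =>
    have shifted : ∑ i ∈ s, (a i - a k) * w i ≤ 0 := by
      refine ih k_min fun τ hτ ↦ ?_
      have := hw τ ((hM k (mem_insert_self k s)).trans_lt hτ)
      rwa [filter_insert, if_neg hτ.not_ge] at this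
    have split : ∑ i ∈ insert k s, (a i - M) * w i =
        ∑ i ∈ s, (a i - a k) * w i + (a k - M) * ∑ i ∈ insert k s, w i := by
      rw [sum_insert hk, sum_insert hk, mul_add, mul_sum, add_left_comm, ← sum_add_distrib]
      exact congrArg _ (sum_congr rfl fun i _ ↦ by ring)
    obtain h | h := (hM k (mem_insert_self k s)).eq_or_lt
    · rw [split, ← h, sub_self, zero_mul, add_zero, h]
      exact shifted
    · have total := hw (a k) h
      rw [filter_true_of_mem (by simpa using k_min)] at total
      rw [split]
      exact add_nonpos shifted (mul_nonpos_of_nonneg_of_nonpos (sub_nonneg.2 h.le) total)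

theorem sum_mul_le_sum_mul_of_superlevel [Fintype ι] (a : ι → R) {u v : ι → R}
    (htotal : ∑ i, u i = ∑ i, v i)
    (h : ∀ τ, ∑ i with τ ≤ a i, u i ≤ ∑ i with τ ≤ a i, v i) :
    ∑ i, a i * u i ≤ ∑ i, a i * v i := by
  obtain ⟨M, hM⟩ : BddBelow (Set.range a) := (Set.finite_range a).bddBelow
  have key := sum_sub_mul_nonpos_of_superlevel univ a (u - v) (fun i _ ↦ hM ⟨i, rfl⟩) fun τ _ ↦ by
    simpa using h τ
  have expand : ∑ i, (a i - M) * (u - v) i =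
      ∑ i, a i * u i - ∑ i, a i * v i - M * (∑ i, u i - ∑ i, v i) := by
    simp only [Pi.sub_apply, mul_sum, ← sum_sub_distrib]
    exact sum_congr rfl fun i _ ↦ by ring
  rw [expand, htotal] at key
  linarith

theorem sum_mul_le_sum_comp_of_superlevel {J : Type*} [Fintype ι] [Fintype J] (a : ι → R)
    {u : ι → R} (g : J → ι) (htotal : ∑ i, u i = Fintype.card J)
    (h : ∀ τ, ∑ i with τ ≤ a i, u i ≤ #{j | τ ≤ a (g j)}) :
    ∑ i, a i * u i ≤ ∑ j, a (g j) := by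
  classical
  have sum_fiber (f : ι → R) : ∑ i, f i * #{j | g j = i} = ∑ j, f (g j) := by
    simp [← sum_fiberwise' univ g f, mul_comm]
  rw [← sum_fiber]
  refine sum_mul_le_sum_mul_of_superlevel a ?_ fun τ ↦ (h τ).trans_eq ?_
  · simpa [htotal] using (sum_fiber 1).symm
  · simpa [sum_filter] using (sum_fiber fun i ↦ if τ ≤ a i then 1 else 0).symm

end AbelSummation

section Frames

variable {d n : ℕ} {m : Fin n → ℕ} (F : ∀ i : Fin n, Matrix (Fin d) (Fin (m i)) ℝ)

/-- The transpose of the concatenated matrix `[X₁ | … | Xₙ]`, so that its row bases are the bases of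
`ℝ^d` consisting of columns of the `Xᵢ`. -/
def colMatrix : Matrix ((i : Fin n) × Fin (m i)) (Fin d) ℝ := Matrix.of (col F)

theorem sum_smul_mul_transpose (w : Fin n → ℝ) :
    ∑ i, w i • (F i * (F i)ᵀ) =
      (colMatrix F)ᵀ * diagonal (fun q : (i : Fin n) × Fin (m i) ↦ w q.1) * colMatrix F := by
  ext r s
  rw [Matrix.mul_apply, Fintype.sum_sigma]
  simp only [mul_diagonal]
  simp [Matrix.sum_apply, Matrix.mul_apply, colMatrix, col, mul_sum, mul_left_comm,
    mul_assoc]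

theorem iSup_colSpan (I : Finset (Fin n)) :
    ⨆ i ∈ I, colSpan (F i) = Submodule.span ℝ (colMatrix F '' {q | q.1 ∈ I}) := by
  simp only [colSpan, ← Submodule.span_iUnion₂]
  congr 1
  ext v
  simp only [Set.mem_iUnion]
  constructor
  · rintro ⟨i, hi, k, rfl⟩
    exact ⟨⟨i, k⟩, hi, rfl⟩
  · rintro ⟨⟨i, k⟩, hi, rfl⟩
    exact ⟨i, hi, k, rfl⟩

variable {F}

theorem IsMatrixFrame.nonempty_rowBasis (hF : IsMatrixFrame F) :
    Nonempty (RowBasis (colMatrix F)) := by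
  have frameOp_eq : frameOp F = (colMatrix F)ᵀ * colMatrix F := by
    simpa [frameOp] using sum_smul_mul_transpose F fun _ ↦ 1
  exact nonempty_rowBasis_of_det_mul_ne_zero (frameOp_eq ▸ (Matrix.PosDef.det_pos hF).ne')

theorem IsMatrixFrame.bddBelow_range_obj_iff (hF : IsMatrixFrame F) (c : Fin n → ℝ) :
    BddBelow (Set.range (obj F c)) ↔
      ∀ t : Fin n → ℝ, ∑ i, t i * c i ≤ maxWeight (colMatrix F) (fun q ↦ t q.1) := by
  have := hF.nonempty_rowBasis
  obtain ⟨C, hC⟩ := exists_abs_log_det_sub_maxWeight_le (colMatrix F)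
  simp only [← sub_nonneg (b := ∑ i, _ * c i)]
  refine bddBelow_range_iff_nonneg_of_abs_sub_le (C := C) (fun s hs t ↦ ?_) fun t ↦ ?_
  · rw [mul_sub, ← maxWeight_smul _ hs, mul_sum]
    simp only [Pi.smul_apply, smul_eq_mul, mul_assoc]
    rfl
  · simpa [obj, Phi, sum_smul_mul_transpose F fun i ↦ Real.exp (t i)] using hC fun q ↦ t q.1

theorem mem_orbitPolytope_of_le_maxWeight [Nonempty (RowBasis (colMatrix F))] {c : Fin n → ℝ}
    (h : ∀ t : Fin n → ℝ, ∑ i, t i * c i ≤ maxWeight (colMatrix F) (fun q ↦ t q.1)) :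
    c ∈ orbitPolytope F := by
  have exists_basis (t : Fin n → ℝ) :
      ∃ p : RowBasis (colMatrix F), ∑ i, t i * c i ≤ ∑ j, t (p.1 j).1 := by
    obtain ⟨p, hp⟩ := exists_eq_maxWeight (colMatrix F) fun q ↦ t q.1
    exact ⟨p, hp ▸ h t⟩
  refine ⟨fun i ↦ ?_, le_antisymm ?_ ?_, fun I ↦ ?_⟩
  · obtain ⟨p, hp⟩ := exists_basis (-Pi.single i 1)
    have single_nonneg : (0 : Fin n → ℝ) ≤ Pi.single i 1 := Pi.single_nonneg.2 zero_le_one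
    have weight_nonpos : ∑ j, (-Pi.single i 1 : Fin n → ℝ) (p.1 j).1 ≤ 0 :=
      sum_nonpos fun j _ ↦ neg_nonpos.2 (single_nonneg _)
    simpa [Pi.single_apply] using hp.trans weight_nonpos
  · obtain ⟨p, hp⟩ := exists_basis 1
    simpa using hp
  · obtain ⟨p, hp⟩ := exists_basis (-1)
    simpa using hp
  · obtain ⟨p, hp⟩ := exists_basis fun i ↦ if i ∈ I then 1 else 0
    calc ∑ i ∈ I, c i ≤ #{j | (p.1 j).1 ∈ I} := by simpa using hp
      _ ≤ _ := by
        rw [iSup_colSpan]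
        exact_mod_cast p.card_filter_mem_le_finrank_span {q | q.1 ∈ I}

theorem le_maxWeight_of_mem_orbitPolytope [Nonempty (RowBasis (colMatrix F))] {c : Fin n → ℝ}
    (hc : c ∈ orbitPolytope F) (t : Fin n → ℝ) :
    ∑ i, t i * c i ≤ maxWeight (colMatrix F) (fun q ↦ t q.1) := by
  obtain ⟨-, htotal, hle⟩ := hc
  obtain ⟨p, hp⟩ := exists_eq_maxWeight (colMatrix F) fun q ↦ t q.1
  have p_max (q : RowBasis (colMatrix F)) : ∑ j, t (q.1 j).1 ≤ ∑ j, t (p.1 j).1 :=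
    (le_maxWeight (fun q ↦ t q.1) q).trans_eq hp.symm
  rw [← hp]
  refine sum_mul_le_sum_comp_of_superlevel t (fun j ↦ (p.1 j).1) (by simpa using htotal)
    fun τ ↦ (hle _).trans ?_
  have superlevel_eq : {q : (i : Fin n) × Fin (m i) | q.1 ∈ ({i | τ ≤ t i} : Finset (Fin n))} =
      {q | τ ≤ t q.1} := by
    ext
    simp
  rw [iSup_colSpan, superlevel_eq]
  exact_mod_cast p.finrank_span_le_card_of_forall_sum_le (t := fun q ↦ t q.1) p_max τ

theorem mem_orbitPolytope_iff_le_maxWeight [Nonempty (RowBasis (colMatrix F))] {c : Fin n → ℝ} :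
    c ∈ orbitPolytope F ↔
      ∀ t : Fin n → ℝ, ∑ i, t i * c i ≤ maxWeight (colMatrix F) (fun q ↦ t q.1) :=
  ⟨le_maxWeight_of_mem_orbitPolytope, mem_orbitPolytope_of_le_maxWeight⟩

end Frames

theorem domain_of_f_general {d n : ℕ} {m : Fin n → ℕ}
    (F : ∀ i : Fin n, Matrix (Fin d) (Fin (m i)) ℝ) (hF : IsMatrixFrame F) (c : Fin n → ℝ) :
    BddBelow (Set.range (obj F c)) ↔ c ∈ orbitPolytope F := by
  have := hF.nonempty_rowBasis
  rw [hF.bddBelow_range_obj_iff, mem_orbitPolytope_iff_le_maxWeight]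

/-- **Theorem 1(1).**  For a matrix frame `F` and positive rational weights `c`, the value
`f_F(c) = inf_t (Φ_F(t) − ⟨t,c⟩)` is finite (the objective is bounded below) if and only if
`c` lies in the orbit polytope `K_F`. -/
theorem domain_of_f {d n : ℕ} {m : Fin n → ℕ}
    (F : ∀ i : Fin n, Matrix (Fin d) (Fin (m i)) ℝ) (hF : IsMatrixFrame F)
    (c : Fin n → ℚ) (hc : ∀ i, 0 < c i) :
    BddBelow (Set.range (obj F fun i => (c i : ℝ))) ↔
      (fun i => (c i : ℝ)) ∈ orbitPolytope F :=
  domain_of_f_general F hF fun i => (c i : ℝ)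

end MFrames
end
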